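/- Let q ∈ ℂ with 0 < |q| < 1, let A : ℤ → ℂ be any sequence, and let b, t, x ∈ ℂ with b·t ≠ q^{-m} and x ≠ q^{-m} for every m ∈ ℕ. Assume the family (i,j) ↦ A_{i-j} q^{ij} x^j (bq^{-i};q)_j (t;q)_j / ((q;q)_i (q;q)_j (bt;q)_j) indexed by ℕ×ℕ and the family (i,j,k) ↦ A_{i-j} (t q^{i+j})^k x^j (q^{-j};q)_k (b;q)_j / ((q;q)_i (q;q)_j (q;q)_k (x;q)_k (bt;q)_j) indexed by ℕ×ℕ×ℕ are absolutely summable. Then ∑_{i,j≥0} A_{i-j} q^{ij} x^j (bq^{-i};q)_j (t;q)_j / ((q;q)_i (q;q)_j (bt;q)_j) = (x;q)_∞ · ∑_{i,j,k≥0} A_{i-j} (t q^{i+j})^k x^j (q^{-j};q)_k (b;q)_j / ((q;q)_i (q;q)_j (q;q)_k (x;q)_k (bt;q)_j). -/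

import Mathlib

/-- The finite q-shifted factorial `(a;q)_n = ∏_{k=0}^{n-1} (1 - a q^k)`. -/
noncomputable def qPoch (a q : ℂ) (n : ℕ) : ℂ := ∏ k ∈ Finset.range n, (1 - a * q ^ k)

/-- The infinite q-shifted factorial `(a;q)_∞ = ∏_{k=0}^{∞} (1 - a q^k)`. -/
noncomputable def qPochInf (a q : ℂ) : ℂ := ∏' k : ℕ, (1 - a * q ^ k)

/-!
The bridge between the two sides is a third triple series. In the double series put `u = q ^ i` and
expand `∏_{k<n} (u - b q^k) (t;q)_n / ((q;q)_n (bt;q)_n)` by the `q`-Pfaff–Saalschütz sum: its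
`m`-th term carries the factor `∏_{s<m} (u - q^s)`, which vanishes for `m > i`, so after the shift
`(i, j) ↦ (i + m, j + m)` the summation runs over all of `ℕ × ℕ × ℕ`. The same series arises from
the right-hand side: Euler's expansion of `(x q^k;q)_∞ = (x;q)_∞ / (x;q)_k` introduces a fourth
index `m`, and then the sum over `k` is a terminating `q`-binomial sum.
-/

open Filter Finset Topology

/-- The homogeneous `q`-shifted factorial `∏_{k<n} (u - a q^k)`, equal to `u^n (a/u;q)_n` when
`u ≠ 0`. It replaces `(q^{-j};q)_n` and `(b q^{-i};q)_n`, and makes sense in the limit `u → 0`. -/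
noncomputable def qPochHom (u a q : ℂ) (n : ℕ) : ℂ := ∏ k ∈ range n, (u - a * q ^ k)

/-- The coefficient of `w^m` in the `q`-binomial series `(w;q)_∞ / (uw;q)_∞`. Taking `u = q^j` gives
the polynomial `(w;q)_j`, and `u = 0` gives `(w;q)_∞`. -/
noncomputable def qBinomialCoeff (q u : ℂ) (m : ℕ) : ℂ := qPochHom u 1 q m / qPoch q q m

/-- The coefficient of `z^j` in Heine's series `₂φ₁(a, b; c; q, z)`. -/
noncomputable def heineCoeff (q a b c : ℂ) (j : ℕ) : ℂ :=
  qPoch a q j * qPoch b q j / (qPoch q q j * qPoch c q j)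

section ShiftedFactorial

variable {q a : ℂ}

@[simp]
lemma qPoch_zero (a q : ℂ) : qPoch a q 0 = 1 := prod_range_zero _

lemma qPoch_succ (a q : ℂ) (n : ℕ) : qPoch a q (n + 1) = qPoch a q n * (1 - a * q ^ n) :=
  prod_range_succ _ n

lemma one_sub_mul_pow_ne_zero_of_qPoch_ne_zero (h : ∀ n, qPoch a q n ≠ 0) (n : ℕ) :
    1 - a * q ^ n ≠ 0 :=
  right_ne_zero_of_mul (qPoch_succ a q n ▸ h (n + 1))

lemma qPoch_self_ne_zero (hq : ‖q‖ < 1) (n : ℕ) : qPoch q q n ≠ 0 := by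
  refine prod_ne_zero_iff.2 fun k _ h => ?_
  have hpow : q ^ (k + 1) = 1 := by rw [pow_succ', ← sub_eq_zero.1 h]
  have hlt : ‖q ^ (k + 1)‖ < 1 := by
    rw [norm_pow]
    exact pow_lt_one₀ (norm_nonneg q) hq k.succ_ne_zero
  simp [hpow] at hlt

lemma qPoch_ne_zero_of_ne_zpow (h : ∀ m : ℕ, a ≠ q ^ (-(m : ℤ))) (n : ℕ) :
    qPoch a q n ≠ 0 := by
  refine prod_ne_zero_iff.2 fun k _ hk => h k ?_
  rw [zpow_neg, zpow_natCast]
  exact eq_inv_of_mul_eq_one_left (sub_eq_zero.1 hk).symm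

@[simp]
lemma qPochHom_zero (u a q : ℂ) : qPochHom u a q 0 = 1 := prod_range_zero _

lemma qPochHom_succ (u a q : ℂ) (n : ℕ) :
    qPochHom u a q (n + 1) = qPochHom u a q n * (u - a * q ^ n) :=
  prod_range_succ _ n

lemma qPochHom_mul_succ (u a q : ℂ) (n : ℕ) :
    qPochHom (q * u) a q (n + 1) = (q * u - a) * q ^ n * qPochHom u a q n := by
  induction n with
  | zero => simp [qPochHom_succ]
  | succ n ih => rw [qPochHom_succ, ih, qPochHom_succ]; ring

lemma qPochHom_pow_one_eq_zero (q : ℂ) {j n : ℕ} (h : j < n) : qPochHom (q ^ j) 1 q n = 0 :=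
  prod_eq_zero (mem_range.2 h) (by simp)

lemma qPochHom_pow_add_mul_qPoch (q : ℂ) (i m : ℕ) :
    qPochHom (q ^ (i + m)) 1 q m * qPoch q q i = qPochHom 0 1 q m * qPoch q q (i + m) := by
  induction m generalizing i with
  | zero => simp
  | succ m ih =>
    have h := ih (i + 1)
    rw [qPoch_succ] at h
    rw [show i + (m + 1) = i + 1 + m by ring, qPochHom_succ, qPochHom_succ]
    linear_combination -q ^ m * h

lemma qPochHom_pow_eq_mul_qPoch (hq : q ≠ 0) (a : ℂ) (i n : ℕ) :
    qPochHom (q ^ i) a q n = q ^ (i * n) * qPoch (a * q ^ (-(i : ℤ))) q n := by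
  have hi : q ^ i ≠ 0 := pow_ne_zero i hq
  induction n with
  | zero => simp
  | succ n ih =>
    rw [qPochHom_succ, qPoch_succ, ih, zpow_neg, zpow_natCast, Nat.mul_succ, pow_add]
    field_simp

lemma norm_qPochHom_pow_one_le (hq : ‖q‖ ≤ 1) (j n : ℕ) :
    ‖qPochHom (q ^ j) 1 q n‖ ≤ 2 ^ n * ‖qPochHom 0 1 q n‖ := by
  rcases lt_or_ge j n with hjn | hnj
  · rw [qPochHom_pow_one_eq_zero q hjn, norm_zero]
    positivity
  · have hfactor : ∀ s ∈ range n, ‖q ^ j - 1 * q ^ s‖ ≤ 2 * ‖0 - 1 * q ^ s‖ := by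
      intro s hs
      have hsj : ‖q ^ j‖ ≤ ‖q ^ s‖ := by
        rw [norm_pow, norm_pow]
        exact pow_le_pow_of_le_one (norm_nonneg q) hq ((mem_range.1 hs).le.trans hnj)
      rw [one_mul, zero_sub, norm_neg]
      linarith [norm_sub_le (q ^ j) (q ^ s)]
    calc ‖qPochHom (q ^ j) 1 q n‖ = ∏ s ∈ range n, ‖q ^ j - 1 * q ^ s‖ := norm_prod _ _
      _ ≤ ∏ s ∈ range n, 2 * ‖0 - 1 * q ^ s‖ := prod_le_prod (fun _ _ => norm_nonneg _) hfactor
      _ = 2 ^ n * ‖qPochHom 0 1 q n‖ := by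
        rw [← pow_card_mul_prod, card_range, ← norm_prod, qPochHom]

lemma multipliable_one_sub_mul_pow (hq : ‖q‖ < 1) (a : ℂ) :
    Multipliable fun k : ℕ => 1 - a * q ^ k := by
  simp only [sub_eq_add_neg]
  refine multipliable_one_add_of_summable ?_
  simpa only [norm_neg, norm_mul, norm_pow] using
    (summable_geometric_of_lt_one (norm_nonneg q) hq).mul_left ‖a‖

lemma tendsto_qPoch (hq : ‖q‖ < 1) (a : ℂ) :
    Tendsto (qPoch a q) atTop (𝓝 (qPochInf a q)) :=
  (multipliable_one_sub_mul_pow hq a).hasProd.tendsto_prod_nat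

lemma exists_norm_qPoch_le (hq : ‖q‖ < 1) (a : ℂ) : ∃ C, ∀ n, ‖qPoch a q n‖ ≤ C :=
  let ⟨C, hC⟩ := (tendsto_qPoch hq a).norm.bddAbove_range
  ⟨C, fun n => hC ⟨n, rfl⟩⟩

lemma qPoch_mul_qPochInf (hq : ‖q‖ < 1) (a : ℂ) (n : ℕ) :
    qPoch a q n * qPochInf (a * q ^ n) q = qPochInf a q := by
  have hmul := multipliable_one_sub_mul_pow hq (a * q ^ n)
  simp only [mul_assoc, ← pow_add, add_comm n] at hmul
  simp only [qPoch, qPochInf, mul_assoc, ← pow_add, add_comm n]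
  exact hmul.prod_mul_tprod_nat_mul' (f := fun k => 1 - a * q ^ k)

end ShiftedFactorial

section BinomialSeries

variable {q : ℂ}

@[simp]
lemma qBinomialCoeff_zero (q u : ℂ) : qBinomialCoeff q u 0 = 1 := by simp [qBinomialCoeff]

lemma qBinomialCoeff_pow_eq_zero (q : ℂ) {j m : ℕ} (h : j < m) :
    qBinomialCoeff q (q ^ j) m = 0 := by
  rw [qBinomialCoeff, qPochHom_pow_one_eq_zero q h, zero_div]

lemma qBinomialCoeff_succ_mul (hq : ∀ n, qPoch q q n ≠ 0) (u : ℂ) (m : ℕ) :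
    qBinomialCoeff q u (m + 1) * (1 - q ^ (m + 1)) = qBinomialCoeff q u m * (u - q ^ m) := by
  have hm' := one_sub_mul_pow_ne_zero_of_qPoch_ne_zero hq m
  rw [qBinomialCoeff, qBinomialCoeff, qPochHom_succ, qPoch_succ, pow_succ', one_mul,
    div_mul_eq_mul_div, mul_div_mul_right _ _ hm', mul_div_right_comm]

lemma qBinomialCoeff_mul_succ (hq : ∀ n, qPoch q q n ≠ 0) (u : ℂ) (m : ℕ) :
    qBinomialCoeff q (q * u) (m + 1) =
      qBinomialCoeff q u (m + 1) - u * qBinomialCoeff q u m := by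
  have hm' := one_sub_mul_pow_ne_zero_of_qPoch_ne_zero hq m
  rw [qBinomialCoeff, qBinomialCoeff, qBinomialCoeff, qPochHom_mul_succ,
    qPochHom_succ, qPoch_succ, ← mul_div_mul_right (qPochHom u 1 q m) _ hm']
  ring

lemma qBinomialCoeff_pow_add_div (hq : ∀ n, qPoch q q n ≠ 0) (i m : ℕ) :
    qBinomialCoeff q (q ^ (i + m)) m / qPoch q q (i + m) =
      qBinomialCoeff q 0 m / qPoch q q i := by
  have hi := hq i
  have him := hq (i + m)
  rw [qBinomialCoeff, qBinomialCoeff, div_div, div_div, div_eq_div_iff (mul_ne_zero (hq m) him)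
    (mul_ne_zero (hq m) hi)]
  linear_combination qPoch q q m * qPochHom_pow_add_mul_qPoch q i m

theorem hasSum_qBinomialCoeff_pow (hq : ∀ n, qPoch q q n ≠ 0) (w : ℂ) (j : ℕ) :
    HasSum (fun m => qBinomialCoeff q (q ^ j) m * w ^ m) (qPoch w q j) := by
  induction j with
  | zero =>
    convert hasSum_single 0 fun m hm => ?_ using 1
    · simp
    · rw [qBinomialCoeff_pow_eq_zero q (Nat.pos_of_ne_zero hm), zero_mul]
  | succ j ih =>
    have htail := (hasSum_nat_add_iff' 1).2 ih
    refine (hasSum_nat_add_iff' 1).1 ?_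
    convert htail.sub (ih.mul_left (q ^ j * w)) using 1
    · funext m
      rw [pow_succ' q j, qBinomialCoeff_mul_succ hq]
      ring
    · simp only [sum_range_one, qBinomialCoeff_zero, qPoch_succ]
      ring

lemma summable_qBinomialCoeff_zero (hq : ‖q‖ < 1) (w : ℂ) :
    Summable fun m => ‖qBinomialCoeff q 0 m * w ^ m‖ := by
  have hratio : Tendsto (fun m : ℕ => ‖-q ^ m * w / (1 - q * q ^ m)‖) atTop (𝓝 0) := by
    have hpow := tendsto_pow_atTop_nhds_zero_of_norm_lt_one hq
    simpa using ((hpow.neg.mul_const w).div ((hpow.const_mul q).const_sub 1) (by simp)).norm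
  refine Summable.norm (summable_of_ratio_norm_eventually_le (r := 1 / 2) (by norm_num) ?_)
  filter_upwards [hratio.eventually_le_const (show (0 : ℝ) < 1 / 2 by norm_num)] with m hm
  have hq' := qPoch_self_ne_zero hq
  have hne := one_sub_mul_pow_ne_zero_of_qPoch_ne_zero hq' m
  have hstep : qBinomialCoeff q 0 (m + 1) * w ^ (m + 1) =
      -q ^ m * w / (1 - q * q ^ m) * (qBinomialCoeff q 0 m * w ^ m) := by
    have hrec := qBinomialCoeff_succ_mul hq' 0 m
    rw [pow_succ'] at hrec
    rw [eq_div_of_mul_eq hne hrec]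
    ring
  rw [hstep, norm_mul]
  gcongr

-- Let `j → ∞` in the expansion of `(w;q)_j`; the `m`-th terms are dominated by those at `2w`.
theorem hasSum_qBinomialCoeff_zero (hq : ‖q‖ < 1) (w : ℂ) :
    HasSum (fun m => qBinomialCoeff q 0 m * w ^ m) (qPochInf w q) := by
  have hlim : Tendsto (fun j => ∑' m, qBinomialCoeff q (q ^ j) m * w ^ m) atTop
      (𝓝 (∑' m, qBinomialCoeff q 0 m * w ^ m)) := by
    refine tendsto_tsum_of_dominated_convergence (summable_qBinomialCoeff_zero hq (2 * w))
      (fun m => ?_) (.of_forall fun j m => ?_)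
    · have hcont : Continuous fun u => qBinomialCoeff q u m * w ^ m := by
        unfold qBinomialCoeff qPochHom
        fun_prop
      exact (hcont.tendsto 0).comp (tendsto_pow_atTop_nhds_zero_of_norm_lt_one hq)
    · calc ‖qBinomialCoeff q (q ^ j) m * w ^ m‖
          = ‖qPochHom (q ^ j) 1 q m‖ / ‖qPoch q q m‖ * ‖w‖ ^ m := by
            rw [qBinomialCoeff, norm_mul, norm_div, norm_pow]
        _ ≤ 2 ^ m * ‖qPochHom 0 1 q m‖ / ‖qPoch q q m‖ * ‖w‖ ^ m := by
            gcongr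
            exact norm_qPochHom_pow_one_le hq.le j m
        _ = ‖qBinomialCoeff q 0 m * (2 * w) ^ m‖ := by
            simp only [qBinomialCoeff, norm_mul, norm_div, norm_pow, Complex.norm_ofNat]
            ring
  simp only [(hasSum_qBinomialCoeff_pow (qPoch_self_ne_zero hq) w _).tsum_eq] at hlim
  rw [← tendsto_nhds_unique hlim (tendsto_qPoch hq w)]
  exact (summable_qBinomialCoeff_zero hq w).of_norm.hasSum

end BinomialSeries

section Saalschutz

variable {q b t : ℂ}

lemma heineCoeff_succ_mul {a c : ℂ} (hq : ∀ n, qPoch q q n ≠ 0) (hc : ∀ n, qPoch c q n ≠ 0)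
    (j : ℕ) :
    heineCoeff q a b c (j + 1) * ((1 - q ^ (j + 1)) * (1 - c * q ^ j)) =
      heineCoeff q a b c j * ((1 - a * q ^ j) * (1 - b * q ^ j)) := by
  have hne := mul_ne_zero (one_sub_mul_pow_ne_zero_of_qPoch_ne_zero hq j)
    (one_sub_mul_pow_ne_zero_of_qPoch_ne_zero hc j)
  simp only [heineCoeff, qPoch_succ, pow_succ']
  rw [mul_mul_mul_comm (qPoch q q j), mul_mul_mul_comm (qPoch a q j), div_mul_eq_mul_div,
    mul_div_mul_right _ _ hne, mul_div_right_comm]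

-- As in Pascal's rule, the factor on the left is split into a part that cancels against the step
-- `m → m + 1` of `qBinomialCoeff` and a part that cancels against the step `j → j + 1` of
-- `heineCoeff`.
lemma sum_antidiagonal_succ_qBinomialCoeff_mul_heineCoeff (hq : ∀ n, qPoch q q n ≠ 0)
    (hbt : ∀ n, qPoch (b * t) q n ≠ 0) (u : ℂ) (n : ℕ) :
    (∑ p ∈ antidiagonal (n + 1),
        qBinomialCoeff q u p.1 * heineCoeff q b (t * u) (b * t) p.2) *
        ((1 - q * q ^ n) * (1 - b * t * q ^ n)) =
      (∑ p ∈ antidiagonal n, qBinomialCoeff q u p.1 * heineCoeff q b (t * u) (b * t) p.2) *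
        ((u - b * q ^ n) * (1 - t * q ^ n)) := by
  set c := qBinomialCoeff q u
  set g := heineCoeff q b (t * u) (b * t)
  have hsplit : ∀ p ∈ antidiagonal (n + 1),
      c p.1 * g p.2 * ((1 - q * q ^ n) * (1 - b * t * q ^ n)) =
        c p.1 * (1 - q ^ p.1) * g p.2 * (1 - b * t * (q ^ n * q ^ p.2)) +
          c p.1 * (g p.2 * (1 - q ^ p.2)) * (q ^ p.1 - b * t * q ^ n) := by
    intro p hp
    have hpow : q ^ p.1 * q ^ p.2 = q * q ^ n := by
      rw [← pow_add, mem_antidiagonal.1 hp, pow_succ']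
    linear_combination (1 - b * t * q ^ n) * c p.1 * g p.2 * hpow
  have hmerge : ∀ p ∈ antidiagonal n,
      c (p.1 + 1) * (1 - q ^ (p.1 + 1)) * g p.2 * (1 - b * t * (q ^ n * q ^ p.2)) +
          c p.1 * (g (p.2 + 1) * (1 - q ^ (p.2 + 1))) * (q ^ p.1 - b * t * q ^ n) =
        c p.1 * g p.2 * ((u - b * q ^ n) * (1 - t * q ^ n)) := by
    intro p hp
    have hpow : q ^ n = q ^ p.1 * q ^ p.2 := by rw [← pow_add, mem_antidiagonal.1 hp]
    have hc := qBinomialCoeff_succ_mul hq u p.1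
    have hg := heineCoeff_succ_mul (a := b) (b := t * u) hq hbt p.2
    rw [hpow]
    linear_combination g p.2 * (1 - b * t * (q ^ p.1 * q ^ p.2 * q ^ p.2)) * hc +
      c p.1 * q ^ p.1 * hg
  rw [sum_mul, sum_congr rfl hsplit, sum_add_distrib, Nat.sum_antidiagonal_succ,
    Nat.sum_antidiagonal_succ', sum_mul, ← sum_congr rfl hmerge, sum_add_distrib]
  simp only [pow_zero, sub_self, mul_zero, zero_mul, zero_add]

theorem sum_antidiagonal_qBinomialCoeff_mul_heineCoeff (hq : ∀ n, qPoch q q n ≠ 0)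
    (hbt : ∀ n, qPoch (b * t) q n ≠ 0) (u : ℂ) (n : ℕ) :
    ∑ p ∈ antidiagonal n, qBinomialCoeff q u p.1 * heineCoeff q b (t * u) (b * t) p.2 =
      qPochHom u b q n * qPoch t q n / (qPoch q q n * qPoch (b * t) q n) := by
  induction n with
  | zero => simp [heineCoeff]
  | succ n ih =>
    have hne := mul_ne_zero (one_sub_mul_pow_ne_zero_of_qPoch_ne_zero hq n)
      (one_sub_mul_pow_ne_zero_of_qPoch_ne_zero hbt n)
    rw [eq_div_of_mul_eq hne (sum_antidiagonal_succ_qBinomialCoeff_mul_heineCoeff hq hbt u n), ih,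
      div_mul_eq_mul_div, div_div]
    simp only [qPochHom_succ, qPoch_succ]
    congr 1 <;> ring

end Saalschutz

/-- The reindexing `(i, j, m) ↦ (i + m, j + m)` of triples, fibred over its values: the fibre over
`(I, n)` consists of the pairs `(m, j)` with `m + j = n` and `m ≤ I`. -/
def sigmaAntidiagonalLeEquiv :
    (Σ p : ℕ × ℕ, ↥{r ∈ antidiagonal p.2 | r.1 ≤ p.1}) ≃ ℕ × ℕ × ℕ where
  toFun s := (s.1.1 - s.2.1.1, s.2.1.2, s.2.1.1)
  invFun r := ⟨(r.1 + r.2.2, r.2.1 + r.2.2), (r.2.2, r.2.1), by simp [add_comm]⟩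
  left_inv := by
    rintro ⟨⟨I, n⟩, ⟨m, j⟩, h⟩
    obtain ⟨hn, hI⟩ := mem_filter.1 h
    exact Sigma.subtype_ext
      (Prod.ext (Nat.sub_add_cancel hI) ((add_comm j m).trans (mem_antidiagonal.1 hn))) rfl
  right_inv r := by simp

lemma hasSum_sum_antidiagonal_le {α : Type*} [AddCommMonoid α] [TopologicalSpace α]
    [ContinuousAdd α] [RegularSpace α] {f : ℕ × ℕ × ℕ → α} {s : α} (hf : HasSum f s) :
    HasSum (fun p : ℕ × ℕ => ∑ r ∈ antidiagonal p.2 with r.1 ≤ p.1, f (p.1 - r.1, r.2, r.1)) s :=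
  (sigmaAntidiagonalLeEquiv.hasSum_iff.2 hf).sigma fun p =>
    Finset.hasSum _ fun r : ℕ × ℕ => f (p.1 - r.1, r.2, r.1)

section Series

/-- The general term of the double series on the left-hand side. -/
noncomputable def doubleTerm (q : ℂ) (A : ℤ → ℂ) (b t x : ℂ) (p : ℕ × ℕ) : ℂ :=
  A ((p.1 : ℤ) - (p.2 : ℤ)) * q ^ (p.1 * p.2) * x ^ p.2 *
    qPoch (b * q ^ (-(p.1 : ℤ))) q p.2 * qPoch t q p.2 /
    (qPoch q q p.1 * qPoch q q p.2 * qPoch (b * t) q p.2)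

/-- The general term, at `(i, j, k)`, of the triple series on the right-hand side. -/
noncomputable def tripleTerm (q : ℂ) (A : ℤ → ℂ) (b t x : ℂ) (p : ℕ × ℕ × ℕ) : ℂ :=
  A ((p.1 : ℤ) - (p.2.1 : ℤ)) * (t * q ^ (p.1 + p.2.1)) ^ p.2.2 * x ^ p.2.1 *
    qPoch (q ^ (-(p.2.1 : ℤ))) q p.2.2 * qPoch b q p.2.1 /
    (qPoch q q p.1 * qPoch q q p.2.1 * qPoch q q p.2.2 * qPoch x q p.2.2 * qPoch (b * t) q p.2.1)

/-- The general term, at `(i, j, m)`, of the triple series linking the two sides. -/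
noncomputable def middleTerm (q : ℂ) (A : ℤ → ℂ) (b t x : ℂ) (p : ℕ × ℕ × ℕ) : ℂ :=
  A ((p.1 : ℤ) - (p.2.1 : ℤ)) * x ^ (p.2.1 + p.2.2) * (qBinomialCoeff q 0 p.2.2 / qPoch q q p.1) *
    heineCoeff q b (t * q ^ (p.1 + p.2.2)) (b * t) p.2.1

/-- The general term, at `((i, j, k), m)`, of the quadruple series obtained from the right-hand side
by Euler's expansion of `(x;q)_∞ = (x;q)_k (x q^k;q)_∞`. -/
noncomputable def quadrupleTerm (q : ℂ) (A : ℤ → ℂ) (b t x : ℂ) (p : (ℕ × ℕ × ℕ) × ℕ) : ℂ :=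
  tripleTerm q A b t x p.1 *
    (qPoch x q p.1.2.2 * (qBinomialCoeff q 0 p.2 * (x * q ^ p.1.2.2) ^ p.2))

variable {q : ℂ} {A : ℤ → ℂ} {b t x : ℂ}

lemma middleTerm_sub (hq : ∀ n, qPoch q q n ≠ 0) {I m : ℕ} (j : ℕ) (hm : m ≤ I) :
    middleTerm q A b t x (I - m, j, m) =
      A ((I : ℤ) - ((m + j : ℕ) : ℤ)) * x ^ (m + j) / qPoch q q I *
        (qBinomialCoeff q (q ^ I) m * heineCoeff q b (t * q ^ I) (b * t) j) := by
  obtain ⟨i, rfl⟩ := Nat.exists_eq_add_of_le' hm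
  have hA : ((i + m : ℕ) : ℤ) - ((m + j : ℕ) : ℤ) = i - j := by
    push_cast
    ring
  simp only [middleTerm, Nat.add_sub_cancel, ← qBinomialCoeff_pow_add_div hq i m, hA]
  ring

lemma sum_antidiagonal_middleTerm (hq0 : q ≠ 0) (hq : ∀ n, qPoch q q n ≠ 0)
    (hbt : ∀ n, qPoch (b * t) q n ≠ 0) (p : ℕ × ℕ) :
    ∑ r ∈ antidiagonal p.2 with r.1 ≤ p.1, middleTerm q A b t x (p.1 - r.1, r.2, r.1) =
      doubleTerm q A b t x p := by
  obtain ⟨I, n⟩ := p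
  calc ∑ r ∈ antidiagonal n with r.1 ≤ I, middleTerm q A b t x (I - r.1, r.2, r.1)
      = ∑ r ∈ antidiagonal n with r.1 ≤ I, A ((I : ℤ) - (n : ℤ)) * x ^ n / qPoch q q I *
          (qBinomialCoeff q (q ^ I) r.1 * heineCoeff q b (t * q ^ I) (b * t) r.2) := by
        refine sum_congr rfl fun r hr => ?_
        obtain ⟨hn, hI⟩ := mem_filter.1 hr
        rw [middleTerm_sub hq r.2 hI, mem_antidiagonal.1 hn]
    _ = ∑ r ∈ antidiagonal n, A ((I : ℤ) - (n : ℤ)) * x ^ n / qPoch q q I *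
          (qBinomialCoeff q (q ^ I) r.1 * heineCoeff q b (t * q ^ I) (b * t) r.2) := by
        refine sum_filter_of_ne fun r _ hr => ?_
        contrapose! hr
        rw [qBinomialCoeff_pow_eq_zero q hr, zero_mul, mul_zero]
    _ = doubleTerm q A b t x (I, n) := by
        rw [← mul_sum, sum_antidiagonal_qBinomialCoeff_mul_heineCoeff hq hbt,
          qPochHom_pow_eq_mul_qPoch hq0, doubleTerm]
        ring

lemma hasSum_doubleTerm (hq0 : q ≠ 0) (hq : ∀ n, qPoch q q n ≠ 0)
    (hbt : ∀ n, qPoch (b * t) q n ≠ 0) {s : ℂ} (h : HasSum (middleTerm q A b t x) s) :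
    HasSum (doubleTerm q A b t x) s := by
  simpa only [sum_antidiagonal_middleTerm hq0 hq hbt] using hasSum_sum_antidiagonal_le h

lemma summable_quadrupleTerm (hq : ‖q‖ < 1) (h : Summable (tripleTerm q A b t x)) :
    Summable (quadrupleTerm q A b t x) := by
  obtain ⟨C, hC⟩ := exists_norm_qPoch_le hq x
  have hC0 : 0 ≤ C := (norm_nonneg _).trans (hC 0)
  have hbound : Summable fun p : (ℕ × ℕ × ℕ) × ℕ =>
      ‖tripleTerm q A b t x p.1‖ * (C * ‖qBinomialCoeff q 0 p.2 * x ^ p.2‖) :=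
    h.norm.mul_of_nonneg ((summable_qBinomialCoeff_zero hq x).mul_left C)
      (fun _ => norm_nonneg _) (fun _ => mul_nonneg hC0 (norm_nonneg _))
  refine Summable.of_norm_bounded hbound fun ⟨⟨i, j, k⟩, m⟩ => ?_
  have hqk : ‖x * q ^ k‖ ≤ ‖x‖ := by
    rw [norm_mul, norm_pow]
    exact mul_le_of_le_one_right (norm_nonneg x) (pow_le_one₀ (norm_nonneg q) hq.le)
  simp only [quadrupleTerm, norm_mul (tripleTerm _ _ _ _ _ _), norm_mul (qPoch _ _ _),
    norm_mul (qBinomialCoeff _ _ _), norm_pow _ m]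
  gcongr
  exact hC k

lemma hasSum_quadrupleTerm_right (hq : ‖q‖ < 1) (p : ℕ × ℕ × ℕ) :
    HasSum (fun m => quadrupleTerm q A b t x (p, m))
      (tripleTerm q A b t x p * qPochInf x q) := by
  rw [← qPoch_mul_qPochInf hq x p.2.2]
  exact ((hasSum_qBinomialCoeff_zero hq (x * q ^ p.2.2)).mul_left (qPoch x q p.2.2)).mul_left
    (tripleTerm q A b t x p)

lemma quadrupleTerm_eq (hq0 : q ≠ 0) {k : ℕ} (hk : qPoch x q k ≠ 0) (i j m : ℕ) :
    quadrupleTerm q A b t x ((i, j, k), m) =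
      A ((i : ℤ) - (j : ℤ)) * x ^ (j + m) * (qBinomialCoeff q 0 m / qPoch q q i) *
        (qPoch b q j / (qPoch q q j * qPoch (b * t) q j)) *
          (qBinomialCoeff q (q ^ j) k * (t * q ^ (i + m)) ^ k) := by
  have hcoeff : qBinomialCoeff q (q ^ j) k =
      q ^ (j * k) * qPoch (q ^ (-(j : ℤ))) q k / qPoch q q k := by
    rw [qBinomialCoeff, qPochHom_pow_eq_mul_qPoch hq0, one_mul]
  simp only [quadrupleTerm, tripleTerm, hcoeff]
  field_simp
  ring

lemma hasSum_quadrupleTerm_middle (hq0 : q ≠ 0) (hq : ∀ n, qPoch q q n ≠ 0)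
    (hx : ∀ n, qPoch x q n ≠ 0) (i j m : ℕ) :
    HasSum (fun k => quadrupleTerm q A b t x ((i, j, k), m))
      (middleTerm q A b t x (i, j, m)) := by
  have hmiddle : middleTerm q A b t x (i, j, m) =
      A ((i : ℤ) - (j : ℤ)) * x ^ (j + m) * (qBinomialCoeff q 0 m / qPoch q q i) *
        (qPoch b q j / (qPoch q q j * qPoch (b * t) q j)) * qPoch (t * q ^ (i + m)) q j := by
    simp only [middleTerm, heineCoeff]
    ring
  rw [hmiddle, funext fun k => quadrupleTerm_eq hq0 (hx k) i j m]
  exact (hasSum_qBinomialCoeff_pow hq (t * q ^ (i + m)) j).mul_left _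

lemma hasSum_middleTerm (hq0 : q ≠ 0) (hq : ‖q‖ < 1) (hx : ∀ n, qPoch x q n ≠ 0)
    (h : Summable (tripleTerm q A b t x)) :
    HasSum (middleTerm q A b t x) (qPochInf x q * ∑' p, tripleTerm q A b t x p) := by
  obtain ⟨s, hs⟩ := summable_quadrupleTerm hq h
  have hright : s = qPochInf x q * ∑' p, tripleTerm q A b t x p := by
    rw [mul_comm, ← tsum_mul_right]
    exact (hs.prod_fiberwise (hasSum_quadrupleTerm_right hq)).tsum_eq.symm
  let swap : (ℕ × ℕ × ℕ) × ℕ ≃ (ℕ × ℕ × ℕ) × ℕ :=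
    Function.Involutive.toPerm (fun p => ((p.1.1, p.1.2.1, p.2), p.1.2.2)) fun _ => rfl
  rw [← hright]
  exact (swap.hasSum_iff.2 hs).prod_fiberwise fun p =>
    hasSum_quadrupleTerm_middle hq0 (qPoch_self_ne_zero hq) hx p.1 p.2.1 p.2.2

end Series

theorem stmt2_general {q : ℂ} (hq0 : q ≠ 0) (hq1 : ‖q‖ < 1) {A : ℤ → ℂ} {b t x : ℂ}
    (hbt : ∀ n, qPoch (b * t) q n ≠ 0) (hx : ∀ n, qPoch x q n ≠ 0)
    (h : Summable (tripleTerm q A b t x)) :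
    HasSum (doubleTerm q A b t x) (qPochInf x q * ∑' p, tripleTerm q A b t x p) :=
  hasSum_doubleTerm hq0 (qPoch_self_ne_zero hq1) hbt (hasSum_middleTerm hq0 hq1 hx h)

theorem stmt2 (q : ℂ) (hq0 : 0 < ‖q‖) (hq1 : ‖q‖ < 1)
    (A : ℤ → ℂ) (b t x : ℂ)
    (hbt : ∀ m : ℕ, b * t ≠ q ^ (-(m : ℤ)))
    (hx : ∀ m : ℕ, x ≠ q ^ (-(m : ℤ)))
    (h1 : Summable (fun p : ℕ × ℕ => ‖A ((p.1 : ℤ) - (p.2 : ℤ)) * q ^ (p.1 * p.2) * x ^ p.2 *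
      qPoch (b * q ^ (-(p.1 : ℤ))) q p.2 * qPoch t q p.2 /
      (qPoch q q p.1 * qPoch q q p.2 * qPoch (b * t) q p.2)‖))
    (h2 : Summable (fun p : ℕ × ℕ × ℕ => ‖A ((p.1 : ℤ) - (p.2.1 : ℤ)) *
      (t * q ^ (p.1 + p.2.1)) ^ p.2.2 * x ^ p.2.1 *
      qPoch (q ^ (-(p.2.1 : ℤ))) q p.2.2 * qPoch b q p.2.1 /
      (qPoch q q p.1 * qPoch q q p.2.1 * qPoch q q p.2.2 * qPoch x q p.2.2 *
        qPoch (b * t) q p.2.1)‖)) :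
    ∑' p : ℕ × ℕ, A ((p.1 : ℤ) - (p.2 : ℤ)) * q ^ (p.1 * p.2) * x ^ p.2 *
      qPoch (b * q ^ (-(p.1 : ℤ))) q p.2 * qPoch t q p.2 /
      (qPoch q q p.1 * qPoch q q p.2 * qPoch (b * t) q p.2)
    = qPochInf x q * ∑' p : ℕ × ℕ × ℕ, A ((p.1 : ℤ) - (p.2.1 : ℤ)) *
      (t * q ^ (p.1 + p.2.1)) ^ p.2.2 * x ^ p.2.1 *
      qPoch (q ^ (-(p.2.1 : ℤ))) q p.2.2 * qPoch b q p.2.1 /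
      (qPoch q q p.1 * qPoch q q p.2.1 * qPoch q q p.2.2 * qPoch x q p.2.2 *
        qPoch (b * t) q p.2.1) :=
  (stmt2_general (norm_pos_iff.1 hq0) hq1 (qPoch_ne_zero_of_ne_zpow hbt)
    (qPoch_ne_zero_of_ne_zpow hx) h2.of_norm).tsum_eq
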